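/- A set Λ' ⊆ Σ is a blur shift space with resolution V (that is, Λ' = Σ_Λ for some shift space Λ ⊆ A^ℕ) if and only if Λ' is σ-invariant, closed in Σ with respect to the topology generated by the generalized cylinders, and satisfies the infinite-extension property: with Λ := Λ' ∩ A^ℕ, for every finite word a_0…a_{n−1} over A and every H ∈ V, the point (a_0…a_{n−1} H̃ H̃ …) belongs to Λ' if and only if a_0…a_{n−1} ∈ B(Λ) and F_Λ(a_0…a_{n−1}) ∩ H is infinite. -/

import Mathlib

open Set Filter Topology

namespace BlurPaper

/-- The extended alphabet `Ā = A ⊕ V`, where each blurred set `H ∈ V` is regarded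
as a new symbol `H̃`. -/
abbrev Symb (A : Type*) (V : Set (Set A)) := A ⊕ {H : Set A // H ∈ V}

/-- `V` is a family of blurred sets: every member is infinite and two distinct members
have finite intersection. -/
def IsBlurFamily {A : Type*} (V : Set (Set A)) : Prop :=
  (∀ H ∈ V, H.Infinite) ∧ ∀ G ∈ V, ∀ H ∈ V, G ≠ H → (G ∩ H).Finite

/-- The full blur shift `Σ`: sequences over `Ā` such that a blur symbol is followed
by the same blur symbol. -/
def FullBlur (A : Type*) (V : Set (Set A)) : Set (ℕ → Symb A V) :=
  {x | ∀ (i : ℕ) (H : {H : Set A // H ∈ V}), x i = Sum.inr H → x (i + 1) = Sum.inr H}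

/-- Generalized cylinder `Z(α)`. -/
def Z (A : Type*) (V : Set (Set A)) (α : List A) : Set (FullBlur A V) :=
  {x | ∀ i : Fin α.length, x.1 i = Sum.inl (α.get i)}

/-- Generalized cylinder `Z(α, H, F)`. -/
def ZH (A : Type*) (V : Set (Set A)) (α : List A) (H : {H : Set A // H ∈ V})
    (F : Set A) : Set (FullBlur A V) :=
  {x | (∀ i : Fin α.length, x.1 i = Sum.inl (α.get i)) ∧
    (x.1 α.length = Sum.inr H ∨ ∃ a ∈ H.1 \ F, x.1 α.length = Sum.inl a)}

/-- The collection of all generalized cylinders. -/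
def Cylinders (A : Type*) (V : Set (Set A)) : Set (Set (FullBlur A V)) :=
  {U | ∃ α : List A, U = Z A V α} ∪
  {U | ∃ (α : List A) (H : {H : Set A // H ∈ V}) (F : Set A),
    F ⊆ H.1 ∧ F.Finite ∧ U = ZH A V α H F}

/-- The topology on the full blur shift generated by the generalized cylinders. -/
def tau (A : Type*) (V : Set (Set A)) : TopologicalSpace (FullBlur A V) :=
  TopologicalSpace.generateFrom (Cylinders A V)

/-- The shift map on the full blur shift. -/
def shift (A : Type*) (V : Set (Set A)) : FullBlur A V → FullBlur A V :=
  fun x => ⟨fun i => x.1 (i + 1), fun i H h => x.2 (i + 1) H h⟩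

/-- The shift map on `A^ℕ`. -/
def shiftSeq (A : Type*) : (ℕ → A) → ℕ → A := fun x i => x (i + 1)

/-- The prodiscrete topology on `A^ℕ` (product of discrete topologies). -/
def prodDiscrete (A : Type*) : TopologicalSpace (ℕ → A) :=
  @Pi.topologicalSpace ℕ (fun _ => A) fun _ => ⊥

/-- A (classical) shift space over `A`: closed in the prodiscrete topology and
invariant under the shift map. -/
def IsShiftSpace {A : Type*} (Λ : Set (ℕ → A)) : Prop :=
  @IsClosed _ (prodDiscrete A) Λ ∧ ∀ x ∈ Λ, shiftSeq A x ∈ Λ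

/-- `w ∈ B(Y)`: the finite word `w` appears as an initial word of some element of `Y`. -/
def InLang {A : Type*} (Y : Set (ℕ → A)) (w : List A) : Prop :=
  ∃ x ∈ Y, ∀ i : Fin w.length, x i = w.get i

/-- The follower set `F_Y(w) = {a : w a ∈ B(Y)}`. -/
def Fol {A : Type*} (Y : Set (ℕ → A)) (w : List A) : Set A :=
  {a | InLang Y (w ++ [a])}

/-- The predecessor set `P_Y(a) = {b : b a ∈ B(Y)}`. -/
def Pred {A : Type*} (Y : Set (ℕ → A)) (a : A) : Set A :=
  {b | InLang Y [b, a]}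

/-- `B₁(Y)`: the set of letters occurring in sequences of `Y`. -/
def letters {A : Type*} (Y : Set (ℕ → A)) : Set A :=
  {a | ∃ x ∈ Y, ∃ i, x i = a}

/-- The canonical embedding `A^ℕ → Σ`. -/
def embed (A : Type*) (V : Set (Set A)) : (ℕ → A) → FullBlur A V :=
  fun x => ⟨fun i => Sum.inl (x i), fun _ _ h => absurd h (by simp)⟩

/-- The point `(a₀ … a_{n-1} H̃ H̃ H̃ …)` of the full blur shift. -/
def wordBlur {A : Type*} {V : Set (Set A)} (α : List A) (H : {H : Set A // H ∈ V}) :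
    FullBlur A V :=
  ⟨fun i => if h : i < α.length then Sum.inl (α.get ⟨i, h⟩) else Sum.inr H, by
    intro i K hK
    by_cases h : i < α.length
    · simp only [dif_pos h] at hK
      exact absurd hK (by simp)
    · simp only [dif_neg h] at hK
      simp only [dif_neg (by omega : ¬ i + 1 < α.length)]
      exact hK⟩

/-- The boundary `∂Y`: points `(a₀ … a_{n-1} H̃ H̃ …)` with `a₀ … a_{n-1} ∈ B(Y)` and
`F_Y(a₀ … a_{n-1}) ∩ H` infinite. -/
def boundary (A : Type*) (V : Set (Set A)) (Y : Set (ℕ → A)) : Set (FullBlur A V) :=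
  {z | ∃ (α : List A) (H : {H : Set A // H ∈ V}),
    z = wordBlur α H ∧ InLang Y α ∧ (Fol Y α ∩ H.1).Infinite}

/-- The blur shift space `Σ_Y = Y ∪ ∂Y` of `Y` with resolution `V`. -/
def SigmaOf (A : Type*) (V : Set (Set A)) (Y : Set (ℕ → A)) : Set (FullBlur A V) :=
  embed A V '' Y ∪ boundary A V Y

/-- The subspace topology inherited from the full blur shift. -/
def subTau (A : Type*) (V : Set (Set A)) (X : Set (FullBlur A V)) :
    TopologicalSpace X :=
  TopologicalSpace.induced Subtype.val (tau A V)

/-- `V_Λ`: the blurred sets that appear in `Σ_Λ`, i.e. those meeting `B₁(Λ)` in an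
infinite set. -/
def VLam (A : Type*) (V : Set (Set A)) (Λ : Set (ℕ → A)) : Set (Set A) :=
  {H | H ∈ V ∧ (letters Λ ∩ H).Infinite}

/-!
By `eq_embed_or_eq_wordBlur`, every point of `Σ` is a sequence over `A` or has the form
`a₀ … a_{n-1} H̃ H̃ …`, so a set with the infinite-extension property is the blur shift space of
its trace on `A^ℕ`. That trace inherits closedness because the inclusion of `A^ℕ` is continuous.

Conversely, let `Λ` be closed in `A^ℕ`. A sequence outside `Λ` has a prefix outside `B(Λ)`, whose
cylinder misses `Σ_Λ`. If `a₀ … a_{n-1} H̃ H̃ …` is not in `Σ_Λ`, then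
`F := F_Λ(a₀ … a_{n-1}) ∩ H` is finite, and `Z(a₀ … a_{n-1}, H, F)` is a neighbourhood of that
point missing `Σ_Λ`.
-/

section

variable {A : Type*} {V : Set (Set A)} {Y : Set (ℕ → A)} {Λ' : Set (FullBlur A V)}
  {α β : List A} {H K : {H : Set A // H ∈ V}}

theorem InLang.of_append_left (h : InLang Y (α ++ β)) : InLang Y α := by
  obtain ⟨y, hy, hyαβ⟩ := h
  refine ⟨y, hy, fun i => ?_⟩
  simpa using hyαβ (i.castLE (by simp))

theorem InLang.tail (hY : ∀ y ∈ Y, shiftSeq A y ∈ Y) (h : InLang Y α) : InLang Y α.tail := by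
  obtain ⟨y, hy, hyα⟩ := h
  cases α with
  | nil => exact ⟨y, hy, hyα⟩
  | cons a β => exact ⟨shiftSeq A y, hY y hy, fun i => hyα i.succ⟩

theorem fol_subset_fol_tail (hY : ∀ y ∈ Y, shiftSeq A y ∈ Y) (α : List A) :
    Fol Y α ⊆ Fol Y α.tail := by
  cases α with
  | nil => exact Subset.rfl
  | cons b β => exact fun a ha => InLang.tail hY ha

theorem exists_not_inLang_ofFn (hY : IsClosed[prodDiscrete A] Y) {y : ℕ → A} (hy : y ∉ Y) :
    ∃ n, ¬ InLang Y (List.ofFn fun i : Fin n => y i) := by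
  let : TopologicalSpace A := ⊥
  have : DiscreteTopology A := ⟨rfl⟩
  obtain ⟨n, hn⟩ := PiNat.exists_disjoint_cylinder (E := fun _ => A) hY hy
  refine ⟨n, fun ⟨z, hz, hzy⟩ => Set.disjoint_left.1 hn hz fun i hi => ?_⟩
  simpa using hzy ⟨i, by simpa using hi⟩

theorem apply_eq_inr_of_le (x : FullBlur A V) {m n : ℕ} (hm : x.1 m = Sum.inr H)
    (hmn : m ≤ n) : x.1 n = Sum.inr H := by
  induction n, hmn using Nat.le_induction with
  | base => exact hm
  | succ n _ ih => exact x.2 n H ih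

theorem mem_Z_ofFn {n : ℕ} {a : Fin n → A} {x : FullBlur A V} :
    x ∈ Z A V (List.ofFn a) ↔ ∀ i : Fin n, x.1 i = Sum.inl (a i) := by
  constructor
  · intro hx i
    simpa using hx (i.cast (List.length_ofFn (f := a)).symm)
  · rintro hx ⟨i, hi⟩
    simpa using hx ⟨i, by simpa using hi⟩

theorem mem_Z_append_singleton {x : FullBlur A V} {a : A} :
    x ∈ Z A V (α ++ [a]) ↔ x ∈ Z A V α ∧ x.1 α.length = Sum.inl a := by
  constructor
  · intro hx
    exact ⟨fun i => by simpa using hx (i.castLE (by simp)),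
      by simpa using hx ⟨α.length, by simp⟩⟩
  · rintro ⟨hα, ha⟩ ⟨i, hi⟩
    rcases Nat.lt_succ_iff_lt_or_eq.1 (by simpa using hi) with hlt | rfl
    · simpa [List.getElem_append_left hlt] using hα ⟨i, hlt⟩
    · simpa using ha

theorem wordBlur_apply_of_lt (H : {H : Set A // H ∈ V}) {i : ℕ} (hi : i < α.length) :
    (wordBlur α H).1 i = Sum.inl (α.get ⟨i, hi⟩) :=
  dif_pos hi

theorem wordBlur_apply_of_le (H : {H : Set A // H ∈ V}) {i : ℕ} (hi : α.length ≤ i) :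
    (wordBlur α H).1 i = Sum.inr H :=
  dif_neg hi.not_gt

theorem eq_wordBlur_iff {x : FullBlur A V} :
    x = wordBlur α H ↔ x ∈ Z A V α ∧ x.1 α.length = Sum.inr H := by
  constructor
  · rintro rfl
    exact ⟨fun i => wordBlur_apply_of_lt H i.2, wordBlur_apply_of_le H le_rfl⟩
  · rintro ⟨hα, hH⟩
    ext i : 2
    rcases lt_or_ge i α.length with hi | hi
    · rw [wordBlur_apply_of_lt H hi]
      exact hα ⟨i, hi⟩
    · rw [wordBlur_apply_of_le H hi]
      exact apply_eq_inr_of_le x hH hi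

theorem lt_length_of_wordBlur_apply_eq_inl {i : ℕ} {a : A}
    (h : (wordBlur α H).1 i = Sum.inl a) : i < α.length := by
  by_contra! hi
  exact Sum.inr_ne_inl ((wordBlur_apply_of_le H hi).symm.trans h)

theorem length_le_of_wordBlur_apply_eq_inr {i : ℕ}
    (h : (wordBlur α H).1 i = Sum.inr K) : α.length ≤ i := by
  by_contra! hi
  exact Sum.inl_ne_inr ((wordBlur_apply_of_lt H hi).symm.trans h)

theorem wordBlur_inj : wordBlur α H = wordBlur β K ↔ α = β ∧ H = K := by
  refine ⟨fun h => ?_, by rintro ⟨rfl, rfl⟩; rfl⟩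
  obtain ⟨hβ, hK⟩ := eq_wordBlur_iff.1 h
  have hαβ : α.length = β.length :=
    le_antisymm (length_le_of_wordBlur_apply_eq_inr hK)
      (length_le_of_wordBlur_apply_eq_inr (eq_wordBlur_iff.1 h.symm).2)
  refine ⟨List.ext_get hαβ fun i hi hi' => ?_, ?_⟩
  · exact Sum.inl.inj ((wordBlur_apply_of_lt H hi).symm.trans (hβ ⟨i, hi'⟩))
  · exact Sum.inr.inj ((wordBlur_apply_of_le H hαβ.le).symm.trans hK)

theorem embed_injective : Function.Injective (embed A V) := fun _ _ h =>
  funext fun i => Sum.inl.inj (congrFun (congrArg Subtype.val h) i)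

theorem embed_ne_wordBlur (y : ℕ → A) (α : List A) (H : {H : Set A // H ∈ V}) :
    embed A V y ≠ wordBlur α H :=
  fun h => Sum.inl_ne_inr (eq_wordBlur_iff.1 h).2

theorem eq_embed_or_eq_wordBlur (x : FullBlur A V) :
    (∃ y, x = embed A V y) ∨ ∃ α H, x = wordBlur α H := by
  by_cases h : ∃ n, (x.1 n).isRight
  · obtain ⟨H, hH⟩ := Sum.isRight_iff.1 (Nat.find_spec h)
    choose a ha using fun i : Fin (Nat.find h) =>
      Sum.isLeft_iff.1 (Sum.not_isRight.1 (Nat.find_min h i.2))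
    exact Or.inr ⟨List.ofFn a, H, eq_wordBlur_iff.2
      ⟨mem_Z_ofFn.2 ha, by rwa [List.length_ofFn]⟩⟩
  · choose y hy using fun i => Sum.isLeft_iff.1 (Sum.not_isRight.1 (not_exists.1 h i))
    exact Or.inl ⟨y, Subtype.ext (funext hy)⟩

theorem embed_mem_sigmaOf {y : ℕ → A} : embed A V y ∈ SigmaOf A V Y ↔ y ∈ Y := by
  constructor
  · rintro (hy | ⟨α, H, h, -⟩)
    · exact embed_injective.mem_set_image.1 hy
    · exact absurd h (embed_ne_wordBlur y α H)
  · exact fun hy => Or.inl ⟨y, hy, rfl⟩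

theorem preimage_embed_sigmaOf (Y : Set (ℕ → A)) : embed A V ⁻¹' SigmaOf A V Y = Y :=
  Set.ext fun _ => embed_mem_sigmaOf

theorem wordBlur_mem_sigmaOf :
    wordBlur α H ∈ SigmaOf A V Y ↔ InLang Y α ∧ (Fol Y α ∩ H.1).Infinite := by
  constructor
  · rintro (⟨y, -, h⟩ | ⟨β, K, h, hβ⟩)
    · exact absurd h (embed_ne_wordBlur y α H)
    · obtain ⟨rfl, rfl⟩ := wordBlur_inj.1 h
      exact hβ
  · exact fun h => Or.inr ⟨α, H, rfl, h⟩

theorem finite_fol_inter_of_wordBlur_notMem (h : wordBlur α H ∉ SigmaOf A V Y) :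
    (Fol Y α ∩ H.1).Finite := by
  by_contra hinf
  obtain ⟨a, ha, -⟩ := Set.Infinite.nonempty hinf
  exact h (wordBlur_mem_sigmaOf.2 ⟨InLang.of_append_left ha, hinf⟩)

theorem inLang_of_mem_sigmaOf {x : FullBlur A V} (hx : x ∈ SigmaOf A V Y)
    (hβ : x ∈ Z A V β) : InLang Y β := by
  rcases hx with ⟨y, hy, rfl⟩ | ⟨α, H, rfl, ⟨y, hy, hyα⟩, -⟩
  · exact ⟨y, hy, fun i => Sum.inl.inj (hβ i)⟩
  · refine ⟨y, hy, fun i => ?_⟩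
    have hi := lt_length_of_wordBlur_apply_eq_inl (hβ i)
    exact (hyα ⟨i, hi⟩).trans (Sum.inl.inj ((wordBlur_apply_of_lt H hi).symm.trans (hβ i)))

theorem shift_wordBlur (α : List A) (H : {H : Set A // H ∈ V}) :
    shift A V (wordBlur α H) = wordBlur α.tail H := by
  ext i : 2
  cases α with
  | nil => simp [shift, wordBlur]
  | cons a β =>
    rw [List.tail_cons]
    simp [shift, wordBlur]

theorem shift_mem_sigmaOf (hY : ∀ y ∈ Y, shiftSeq A y ∈ Y) :
    ∀ x ∈ SigmaOf A V Y, shift A V x ∈ SigmaOf A V Y := by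
  rintro _ (⟨y, hy, rfl⟩ | ⟨α, H, rfl, hα, hinf⟩)
  · exact embed_mem_sigmaOf.2 (hY y hy)
  · rw [shift_wordBlur]
    exact wordBlur_mem_sigmaOf.2
      ⟨hα.tail hY, hinf.mono (inter_subset_inter_left _ (fol_subset_fol_tail hY α))⟩

theorem isOpen_Z (α : List A) : IsOpen[tau A V] (Z A V α) :=
  TopologicalSpace.isOpen_generateFrom_of_mem (Or.inl ⟨α, rfl⟩)

theorem isOpen_ZH (α : List A) {F : Set A} (hFH : F ⊆ H.1) (hF : F.Finite) :
    IsOpen[tau A V] (ZH A V α H F) :=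
  TopologicalSpace.isOpen_generateFrom_of_mem (Or.inr ⟨α, H, F, hFH, hF, rfl⟩)

theorem disjoint_Z_sigmaOf (hα : ¬ InLang Y α) : Disjoint (Z A V α) (SigmaOf A V Y) :=
  Set.disjoint_left.2 fun _ hxα hx => hα (inLang_of_mem_sigmaOf hx hxα)

theorem disjoint_ZH_sigmaOf (h : wordBlur α H ∉ SigmaOf A V Y) :
    Disjoint (ZH A V α H (Fol Y α ∩ H.1)) (SigmaOf A V Y) := by
  refine Set.disjoint_left.2 ?_
  rintro x ⟨hα, hH | ⟨a, ⟨haH, haF⟩, ha⟩⟩ hx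
  · exact h (eq_wordBlur_iff.2 ⟨hα, hH⟩ ▸ hx)
  · exact haF ⟨inLang_of_mem_sigmaOf hx (mem_Z_append_singleton.2 ⟨hα, ha⟩), haH⟩

theorem isClosed_sigmaOf (hY : IsClosed[prodDiscrete A] Y) :
    IsClosed[tau A V] (SigmaOf A V Y) := by
  let := tau A V
  refine isOpen_compl_iff.1 (isOpen_iff_forall_mem_open.2 fun x hx => ?_)
  rcases eq_embed_or_eq_wordBlur x with ⟨y, rfl⟩ | ⟨α, H, rfl⟩
  · obtain ⟨n, hn⟩ := exists_not_inLang_ofFn hY (mt embed_mem_sigmaOf.2 hx)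
    exact ⟨_, (disjoint_Z_sigmaOf hn).subset_compl_right, isOpen_Z _, mem_Z_ofFn.2 fun _ => rfl⟩
  · obtain ⟨hα, hH⟩ := eq_wordBlur_iff.1 (rfl : wordBlur α H = wordBlur α H)
    exact ⟨_, (disjoint_ZH_sigmaOf hx).subset_compl_right,
      isOpen_ZH α inter_subset_right (finite_fol_inter_of_wordBlur_notMem hx), hα, Or.inl hH⟩

theorem isOpen_prodDiscrete_preimage_eval (i : ℕ) (S : Set A) :
    IsOpen[prodDiscrete A] (Function.eval i ⁻¹' S) := by
  let : TopologicalSpace A := ⊥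
  have : DiscreteTopology A := ⟨rfl⟩
  exact (isOpen_discrete S).preimage (continuous_apply i)

theorem isOpen_preimage_embed_Z (V : Set (Set A)) (α : List A) :
    IsOpen[prodDiscrete A] (embed A V ⁻¹' Z A V α) := by
  have hZ : embed A V ⁻¹' Z A V α =
      ⋂ i : Fin α.length, Function.eval (i : ℕ) ⁻¹' ({α.get i} : Set A) := by
    ext y
    simp [Z, embed]
  let := prodDiscrete A
  rw [hZ]
  exact isOpen_iInter_of_finite fun i => isOpen_prodDiscrete_preimage_eval i _

theorem continuous_embed (A : Type*) (V : Set (Set A)) :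
    Continuous[prodDiscrete A, tau A V] (embed A V) := by
  let := prodDiscrete A
  refine continuous_generateFrom_iff.2 ?_
  rintro _ (⟨α, rfl⟩ | ⟨α, H, F, -, -, rfl⟩)
  · exact isOpen_preimage_embed_Z V α
  · have hZH : embed A V ⁻¹' ZH A V α H F =
        embed A V ⁻¹' Z A V α ∩ Function.eval α.length ⁻¹' (H.1 \ F) := by
      ext y
      simp [Z, ZH, embed]
    rw [hZH]
    exact (isOpen_preimage_embed_Z V α).inter (isOpen_prodDiscrete_preimage_eval _ _)

theorem isShiftSpace_preimage_embed (hinv : ∀ x ∈ Λ', shift A V x ∈ Λ')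
    (hclosed : IsClosed[tau A V] Λ') : IsShiftSpace (embed A V ⁻¹' Λ') := by
  let := prodDiscrete A
  let := tau A V
  exact ⟨hclosed.preimage (continuous_embed A V), fun y hy => hinv (embed A V y) hy⟩

/-- The infinite-extension property of `Λ' ⊆ Σ`, which makes `Λ'` recoverable from its trace
`Λ = Λ' ∩ A^ℕ`, here the preimage of `Λ'` under `embed`. -/
def HasInfiniteExtension (Λ' : Set (FullBlur A V)) : Prop :=
  ∀ (α : List A) (H : {H : Set A // H ∈ V}),
    wordBlur α H ∈ Λ' ↔
      InLang (embed A V ⁻¹' Λ') α ∧ (Fol (embed A V ⁻¹' Λ') α ∩ H.1).Infinite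

theorem hasInfiniteExtension_sigmaOf (Y : Set (ℕ → A)) :
    HasInfiniteExtension (SigmaOf A V Y) := by
  intro α H
  rw [preimage_embed_sigmaOf]
  exact wordBlur_mem_sigmaOf

theorem HasInfiniteExtension.eq_sigmaOf (h : HasInfiniteExtension Λ') :
    Λ' = SigmaOf A V (embed A V ⁻¹' Λ') := by
  ext x
  rcases eq_embed_or_eq_wordBlur x with ⟨y, rfl⟩ | ⟨α, H, rfl⟩
  · exact (embed_mem_sigmaOf (Y := embed A V ⁻¹' Λ')).symm
  · exact (h α H).trans wordBlur_mem_sigmaOf.symm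

end

theorem blurShift_iff_invariant_closed_infExt_general {A : Type*} (V : Set (Set A))
    (Λ' : Set (FullBlur A V)) :
    (∃ Λ : Set (ℕ → A), IsShiftSpace Λ ∧ Λ' = SigmaOf A V Λ) ↔
      (∀ x ∈ Λ', shift A V x ∈ Λ') ∧ IsClosed[tau A V] Λ' ∧ HasInfiniteExtension Λ' := by
  constructor
  · rintro ⟨Λ, ⟨hclosed, hinv⟩, rfl⟩
    exact ⟨shift_mem_sigmaOf hinv, isClosed_sigmaOf hclosed, hasInfiniteExtension_sigmaOf Λ⟩
  · rintro ⟨hinv, hclosed, hext⟩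
    exact ⟨embed A V ⁻¹' Λ', isShiftSpace_preimage_embed hinv hclosed, hext.eq_sigmaOf⟩

/-- `Λ' ⊆ Σ` is a blur shift space with resolution `V` if and only
if `Λ'` is shift invariant, closed in the topology generated by the generalized
cylinders, and satisfies the infinite-extension property with respect to
`Λ = Λ' ∩ A^ℕ`. -/
theorem blurShift_iff_invariant_closed_infExt {A : Type*} (V : Set (Set A))
    (hV : IsBlurFamily V) (Λ' : Set (FullBlur A V)) :
    (∃ Λ : Set (ℕ → A), IsShiftSpace Λ ∧ Λ' = SigmaOf A V Λ) ↔
      ((∀ x ∈ Λ', shift A V x ∈ Λ') ∧ @IsClosed _ (tau A V) Λ' ∧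
        ∀ (α : List A) (H : {H : Set A // H ∈ V}),
          wordBlur α H ∈ Λ' ↔
            InLang {y : ℕ → A | embed A V y ∈ Λ'} α ∧
              (Fol {y : ℕ → A | embed A V y ∈ Λ'} α ∩ H.1).Infinite) :=
  blurShift_iff_invariant_closed_infExt_general V Λ'

end BlurPaper
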